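/- On the 7-dimensional Lie algebra g with structure equations de¹ = e^{35} + e^{46}, de² = 0, de³ = e^{67}, de⁴ = e^{57}, de⁵ = e^{47}, de⁶ = e^{37}, de⁷ = 0, the 4-form ∗φ = e^{1234} + e^{1256} + e^{3456} + e^{1357} − e^{1467} − e^{2367} − e^{2457} is closed; equivalently the G₂-form φ = e^{127} + e^{347} + e^{567} + e^{246} − e^{235} − e^{136} − e^{145} is coclosed with respect to the standard metric making {e_i} orthonormal. -/

import Mathlib

open Finset BigOperators

/-- Kronecker delta as a real number. -/
def kd {n : ℕ} (a i : Fin n) : ℝ := if a = i then 1 else 0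

/-- The 2-form `e^a ∧ e^b` evaluated on basis vectors `e_i, e_j`. -/
def pairF {n : ℕ} (a b i j : Fin n) : ℝ := kd a i * kd b j - kd a j * kd b i

/-- The 3-form `e^a ∧ e^b ∧ e^c` evaluated on basis vectors. -/
def tripF {n : ℕ} (a b c i j k : Fin n) : ℝ :=
  Matrix.det !![kd a i, kd a j, kd a k; kd b i, kd b j, kd b k; kd c i, kd c j, kd c k]

/-- The 4-form `e^a ∧ e^b ∧ e^c ∧ e^d` evaluated on basis vectors. -/
def quadF {n : ℕ} (a b c d i j k l : Fin n) : ℝ :=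
  Matrix.det !![kd a i, kd a j, kd a k, kd a l;
                kd b i, kd b j, kd b k, kd b l;
                kd c i, kd c j, kd c k, kd c l;
                kd d i, kd d j, kd d k, kd d l]

/-- Chevalley–Eilenberg differential of a 2-form, on basis vectors.
`br i a b` is the coefficient of `e_i` in `[e_a, e_b]`. -/
def d2 {n : ℕ} (br : Fin n → Fin n → Fin n → ℝ) (α : Fin n → Fin n → ℝ)
    (a b c : Fin n) : ℝ :=
  -(∑ m, br m a b * α m c) + (∑ m, br m a c * α m b) - (∑ m, br m b c * α m a)

/-- Chevalley–Eilenberg differential of a 3-form, on basis vectors. -/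
def d3 {n : ℕ} (br : Fin n → Fin n → Fin n → ℝ) (α : Fin n → Fin n → Fin n → ℝ)
    (a b c d : Fin n) : ℝ :=
  -(∑ m, br m a b * α m c d) + (∑ m, br m a c * α m b d) - (∑ m, br m a d * α m b c)
  - (∑ m, br m b c * α m a d) + (∑ m, br m b d * α m a c) - (∑ m, br m c d * α m a b)

/-- Chevalley–Eilenberg differential of a 4-form, on basis vectors. -/
def d4 {n : ℕ} (br : Fin n → Fin n → Fin n → ℝ)
    (α : Fin n → Fin n → Fin n → Fin n → ℝ) (a b c d e : Fin n) : ℝ :=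
  -(∑ m, br m a b * α m c d e) + (∑ m, br m a c * α m b d e) - (∑ m, br m a d * α m b c e)
  + (∑ m, br m a e * α m b c d) - (∑ m, br m b c * α m a d e) + (∑ m, br m b d * α m a c e)
  - (∑ m, br m b e * α m a c d) - (∑ m, br m c d * α m a b e) + (∑ m, br m c e * α m a b d)
  - (∑ m, br m d e * α m a b c)

/-- Wedge product of two 2-forms, evaluated on basis vectors. -/
def w22 {n : ℕ} (α β : Fin n → Fin n → ℝ) (i j k l : Fin n) : ℝ :=
  α i j * β k l - α i k * β j l + α i l * β j k
  + α j k * β i l - α j l * β i k + α k l * β i j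

/-- Wedge product of a 2-form and a 1-form, evaluated on basis vectors. -/
def w21 {n : ℕ} (α : Fin n → Fin n → ℝ) (β : Fin n → ℝ) (i j k : Fin n) : ℝ :=
  α i j * β k - α i k * β j + α j k * β i

/-- Wedge product of a 3-form and a 1-form, evaluated on basis vectors. -/
def w31 {n : ℕ} (α : Fin n → Fin n → Fin n → ℝ) (β : Fin n → ℝ) (i j k l : Fin n) : ℝ :=
  α i j k * β l - α i j l * β k + α i k l * β j - α j k l * β i

/-- `ω = e^{12} + e^{34} + e^{56}` (0-indexed). -/
def omega6 : Fin 6 → Fin 6 → ℝ := fun i j => pairF 0 1 i j + pairF 2 3 i j + pairF 4 5 i j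

/-- `ψ₊ = e^{135} − e^{146} − e^{236} − e^{245}` (0-indexed). -/
def psi6 : Fin 6 → Fin 6 → Fin 6 → ℝ := fun i j k =>
  tripF 0 2 4 i j k - tripF 0 3 5 i j k - tripF 1 2 5 i j k - tripF 1 3 4 i j k

/-- `ω` viewed on a 7-dimensional space (indices 0..5). -/
def omega7 : Fin 7 → Fin 7 → ℝ := fun i j => pairF 0 1 i j + pairF 2 3 i j + pairF 4 5 i j

/-- `ψ₊` viewed on a 7-dimensional space. -/
def psi7 : Fin 7 → Fin 7 → Fin 7 → ℝ := fun i j k =>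
  tripF 0 2 4 i j k - tripF 0 3 5 i j k - tripF 1 2 5 i j k - tripF 1 3 4 i j k

/-- `η = e^7`, the 1-form dual to the extra direction. -/
def eta7 : Fin 7 → ℝ := kd 6

/-- The real 6×6 representation of a complex 3×3 matrix: each entry `a+bi`
becomes the 2×2 block `[[a, b], [−b, a]]`. -/
def realRep (A : Matrix (Fin 3) (Fin 3) ℂ) : Matrix (Fin 6) (Fin 6) ℝ :=
  Matrix.of fun i j =>
    let p : Fin 3 := ⟨(i : ℕ) / 2, by have := i.isLt; omega⟩
    let q : Fin 3 := ⟨(j : ℕ) / 2, by have := j.isLt; omega⟩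
    if (i : ℕ) % 2 = 0 then
      (if (j : ℕ) % 2 = 0 then (A p q).re else (A p q).im)
    else
      (if (j : ℕ) % 2 = 0 then -(A p q).im else (A p q).re)

/-- Structure constants of the semidirect sum `g = h ⊕_D ℝξ`, where `f` are the
structure constants of `h` ( `f i a b` = coefficient of `e_i` in `[e_a,e_b]` ),
`ξ = e₇` and `[ξ, U] = D U`. -/
def brg (f : Fin 6 → Fin 6 → Fin 6 → ℝ) (D : Matrix (Fin 6) (Fin 6) ℝ) :
    Fin 7 → Fin 7 → Fin 7 → ℝ := fun i a b =>
  if hi : (i : ℕ) < 6 then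
    if ha : (a : ℕ) < 6 then
      if hb : (b : ℕ) < 6 then f ⟨i, hi⟩ ⟨a, ha⟩ ⟨b, hb⟩
      else -(D ⟨i, hi⟩ ⟨a, ha⟩)
    else
      if hb : (b : ℕ) < 6 then D ⟨i, hi⟩ ⟨b, hb⟩ else 0
  else 0

/-- Structure constants of `g = (e^{35}+e^{46}, 0, e^{67}, e^{57}, e^{47}, e^{37}, 0)`. -/
def bb7 : Fin 7 → Fin 7 → Fin 7 → ℝ := fun i a b =>
  if i = 0 ∧ a = 2 ∧ b = 4 then -1
  else if i = 0 ∧ a = 3 ∧ b = 5 then -1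
  else if i = 2 ∧ a = 5 ∧ b = 6 then -1
  else if i = 3 ∧ a = 4 ∧ b = 6 then -1
  else if i = 4 ∧ a = 3 ∧ b = 6 then -1
  else if i = 5 ∧ a = 2 ∧ b = 6 then -1
  else 0

def br7 : Fin 7 → Fin 7 → Fin 7 → ℝ := fun i a b => bb7 i a b - bb7 i b a

/-- `∗φ = e^{1234}+e^{1256}+e^{3456}+e^{1357}−e^{1467}−e^{2367}−e^{2457}` (0-indexed). -/
def starphi7 : Fin 7 → Fin 7 → Fin 7 → Fin 7 → ℝ := fun i j k l =>
  quadF 0 1 2 3 i j k l + quadF 0 1 4 5 i j k l + quadF 2 3 4 5 i j k l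
    + quadF 0 2 4 6 i j k l - quadF 0 3 5 6 i j k l - quadF 1 2 5 6 i j k l
    - quadF 1 3 4 6 i j k l

theorem bb7_row0 (a b : Fin 7) : bb7 0 a b = -(kd 2 a * kd 4 b + kd 3 a * kd 5 b) := by
  fin_cases a <;> fin_cases b <;> simp [bb7, kd]
theorem bb7_row1 (a b : Fin 7) : bb7 1 a b = 0 := by simp [bb7]
theorem bb7_row2 (a b : Fin 7) : bb7 2 a b = -(kd 5 a * kd 6 b) := by
  fin_cases a <;> fin_cases b <;> simp [bb7, kd]
theorem bb7_row3 (a b : Fin 7) : bb7 3 a b = -(kd 4 a * kd 6 b) := by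
  fin_cases a <;> fin_cases b <;> simp [bb7, kd]
theorem bb7_row4 (a b : Fin 7) : bb7 4 a b = -(kd 3 a * kd 6 b) := by
  fin_cases a <;> fin_cases b <;> simp [bb7, kd]
theorem bb7_row5 (a b : Fin 7) : bb7 5 a b = -(kd 2 a * kd 6 b) := by
  fin_cases a <;> fin_cases b <;> simp [bb7, kd]
theorem bb7_row6 (a b : Fin 7) : bb7 6 a b = 0 := by simp [bb7]

theorem kd_self {n : ℕ} (a : Fin n) : kd a a = 1 := by simp [kd]
theorem kd_ne {n : ℕ} {a b : Fin n} (h : a ≠ b) : kd a b = 0 := by simp [kd, h]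

/-- The 3-form `e^b ∧ e^c ∧ e^d` as an explicit polynomial. -/
def tri (b c d j k l : Fin 7) : ℝ :=
  kd b j * (kd c k * kd d l - kd c l * kd d k) - kd b k * (kd c j * kd d l - kd c l * kd d j)
    + kd b l * (kd c j * kd d k - kd c k * kd d j)

/-- Expansion of `quadF` along the first column, i.e. the contraction of a 4-form. -/
theorem quadF_expand (a b c d i j k l : Fin 7) : quadF a b c d i j k l =
    kd a i * tri b c d j k l - kd b i * tri a c d j k l + kd c i * tri a b d j k l
      - kd d i * tri a b c j k l := by
  simp [quadF, tri, Matrix.det_succ_row_zero, Fin.sum_univ_succ, Fin.succAbove]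
  ring

theorem starphi_row0 (j k l : Fin 7) : starphi7 0 j k l =
    tri 1 2 3 j k l + tri 1 4 5 j k l + tri 2 4 6 j k l - tri 3 5 6 j k l := by
  simp [starphi7, quadF_expand, kd_self, kd_ne]
theorem starphi_row2 (j k l : Fin 7) : starphi7 2 j k l =
    tri 0 1 3 j k l + tri 3 4 5 j k l - tri 0 4 6 j k l + tri 1 5 6 j k l := by
  rw [sub_eq_add_neg (tri 0 1 3 j k l + tri 3 4 5 j k l)]
  simp [starphi7, quadF_expand, kd_self, kd_ne]
theorem starphi_row3 (j k l : Fin 7) : starphi7 3 j k l =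
    -tri 0 1 2 j k l - tri 2 4 5 j k l + tri 0 5 6 j k l + tri 1 4 6 j k l := by
  simp [starphi7, quadF_expand, kd_self, kd_ne]
  try ring
theorem starphi_row4 (j k l : Fin 7) : starphi7 4 j k l =
    tri 0 1 5 j k l + tri 2 3 5 j k l + tri 0 2 6 j k l - tri 1 3 6 j k l := by
  simp [starphi7, quadF_expand, kd_self, kd_ne]
theorem starphi_row5 (j k l : Fin 7) : starphi7 5 j k l =
    -tri 0 1 4 j k l - tri 2 3 4 j k l - tri 0 3 6 j k l - tri 1 2 6 j k l := by
  simp [starphi7, quadF_expand, kd_self, kd_ne]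
  try ring

/-- The contraction `∑ m, br m a b * ∗φ(e_m, ...)` written with nonzero rows only. -/
theorem contract (a b c d e : Fin 7) : ∑ m, br7 m a b * starphi7 m c d e =
    -((kd 2 a * kd 4 b + kd 3 a * kd 5 b - kd 2 b * kd 4 a - kd 3 b * kd 5 a)
        * (tri 1 2 3 c d e + tri 1 4 5 c d e + tri 2 4 6 c d e - tri 3 5 6 c d e)
      + (kd 5 a * kd 6 b - kd 5 b * kd 6 a)
        * (tri 0 1 3 c d e + tri 3 4 5 c d e - tri 0 4 6 c d e + tri 1 5 6 c d e)
      + (kd 4 a * kd 6 b - kd 4 b * kd 6 a)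
        * (-tri 0 1 2 c d e - tri 2 4 5 c d e + tri 0 5 6 c d e + tri 1 4 6 c d e)
      + (kd 3 a * kd 6 b - kd 3 b * kd 6 a)
        * (tri 0 1 5 c d e + tri 2 3 5 c d e + tri 0 2 6 c d e - tri 1 3 6 c d e)
      + (kd 2 a * kd 6 b - kd 2 b * kd 6 a)
        * (-tri 0 1 4 c d e - tri 2 3 4 c d e - tri 0 3 6 c d e - tri 1 2 6 c d e)) := by
  simp only [Fin.sum_univ_seven, br7, bb7_row0, bb7_row1, bb7_row2, bb7_row3, bb7_row4,
    bb7_row5, bb7_row6, starphi_row0, starphi_row2, starphi_row3, starphi_row4, starphi_row5]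
  ring

set_option maxHeartbeats 4000000 in
/-- `d(∗φ) = 0`, i.e. the G₂-form `φ` is coclosed. -/
theorem stmt_7 : ∀ a b c d e : Fin 7, d4 br7 starphi7 a b c d e = 0 := by
  intro a b c d e
  simp only [d4, contract, tri]
  ring
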